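/- There exist constants C_l, C_u > 0, depending only on k, ℓ and L₀, such that for every quasi shell solution y and every r ∈ [R₀, 2R₀] with γ(r) ≥ 0 one has C_l γ(r)^{k+ℓ+5/2}/r⁴ ≤ p(r) ≤ C_u γ(r)^{k+ℓ+5/2}/r⁴. -/

import Mathlib

open MeasureTheory Real Set Filter

/-- The constant `c_ℓ = 2π ∫₀¹ s^ℓ (1-s)^{-1/2} ds`. -/
noncomputable def cConst (ℓ : ℝ) : ℝ :=
  2 * π * ∫ s in Set.Ioc (0 : ℝ) 1, s ^ ℓ / Real.sqrt (1 - s)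

/-- Energy density of the massless Einstein--Vlasov ansatz. -/
noncomputable def rho (k ℓ L0 : ℝ) (y : ℝ → ℝ) (r : ℝ) : ℝ :=
  cConst ℓ * r ^ (2 * ℓ) *
    ∫ ε in Set.Ioc (Real.sqrt L0 / r) (Real.exp (y r)),
      (1 - ε * Real.exp (-(y r))) ^ k * ε ^ 2 * (ε ^ 2 - L0 / r ^ 2) ^ (ℓ + 1 / 2)

/-- Radial pressure of the massless Einstein--Vlasov ansatz. -/
noncomputable def pres (k ℓ L0 : ℝ) (y : ℝ → ℝ) (r : ℝ) : ℝ :=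
  (cConst ℓ / (2 * ℓ + 3)) * r ^ (2 * ℓ) *
    ∫ ε in Set.Ioc (Real.sqrt L0 / r) (Real.exp (y r)),
      (1 - ε * Real.exp (-(y r))) ^ k * (ε ^ 2 - L0 / r ^ 2) ^ (ℓ + 3 / 2)

/-- The Hawking mass `m(r) = 4π ∫₀ʳ s² ϱ(s) ds`. -/
noncomputable def hawkingMass (k ℓ L0 : ℝ) (y : ℝ → ℝ) (r : ℝ) : ℝ :=
  4 * π * ∫ s in Set.Ioc (0 : ℝ) r, s ^ 2 * rho k ℓ L0 y s

/-- The characteristic function `γ(r) = y(r) - (1/2) ln (L₀ / r²)`. -/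
noncomputable def charFn (L0 : ℝ) (y : ℝ → ℝ) (r : ℝ) : ℝ :=
  y r - (1 / 2) * Real.log (L0 / r ^ 2)

/-- The inner radius `R₀ = √L₀ e^{-y(0)}`. -/
noncomputable def innerRadius (L0 : ℝ) (y : ℝ → ℝ) : ℝ :=
  Real.sqrt L0 * Real.exp (-(y 0))

/-- A quasi shell solution of the massless Einstein--Vlasov system. -/
def QuasiShell (k ℓ L0 : ℝ) (y : ℝ → ℝ) : Prop :=
  ContDiffOn ℝ 1 y (Set.Ici 0) ∧
  ∀ r > 0, 2 * hawkingMass k ℓ L0 y r / r < 1 ∧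
    HasDerivAt y
      (-(1 - 2 * hawkingMass k ℓ L0 y r / r)⁻¹ *
        (4 * π * r * pres k ℓ L0 y r + hawkingMass k ℓ L0 y r / r ^ 2)) r


lemma cConst_integrable (ℓ : ℝ) (hl : -(1 / 2) ≤ ℓ) :
    IntegrableOn (fun s : ℝ => s ^ ℓ / Real.sqrt (1 - s)) (Set.Ioc (0 : ℝ) 1) := by
  have h1 : IntervalIntegrable (fun s : ℝ => s ^ (-(1/2) : ℝ)) volume 0 1 :=
    intervalIntegral.intervalIntegrable_rpow' (by norm_num)
  have h2 : IntervalIntegrable (fun s : ℝ => (1 - s) ^ (-(1/2) : ℝ)) volume 0 1 := by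
    have := (h1.comp_sub_left 1).symm
    simpa using this
  have h3 := (h1.add h2)
  rw [intervalIntegrable_iff_integrableOn_Ioc_of_le zero_le_one] at h3
  refine Integrable.mono' h3 ?_ ?_
  · apply Measurable.aestronglyMeasurable
    fun_prop
  · refine (ae_restrict_iff' measurableSet_Ioc).2 (Eventually.of_forall ?_)
    rintro s ⟨hs0, hs1⟩
    rw [Real.norm_of_nonneg (by positivity)]
    show _ ≤ s ^ (-(1/2) : ℝ) + (1 - s) ^ (-(1/2) : ℝ)
    rcases hs1.eq_or_lt with rfl | hs1
    · simp
    have h1s : 0 < 1 - s := by linarith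
    have e1 : s ^ ℓ ≤ s ^ (-(1/2) : ℝ) := Real.rpow_le_rpow_of_exponent_ge hs0 hs1.le hl
    rw [Real.rpow_neg h1s.le, ← Real.sqrt_eq_rpow]
    rw [Real.rpow_neg hs0.le, ← Real.sqrt_eq_rpow] at e1 ⊢
    have a0 : 0 < √s := Real.sqrt_pos.2 hs0
    have b0 : 0 < √(1-s) := Real.sqrt_pos.2 h1s
    have a2 := Real.sq_sqrt hs0.le
    have b2 := Real.sq_sqrt h1s.le
    have hab : 1 ≤ √s + √(1-s) := by nlinarith [mul_pos a0 b0]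
    calc s ^ ℓ / √(1-s) ≤ (√s)⁻¹ / √(1-s) := by gcongr
      _ ≤ (√s + √(1-s)) * ((√s)⁻¹ / √(1-s)) := le_mul_of_one_le_left (by positivity) hab
      _ = (√s)⁻¹ + (√(1-s))⁻¹ := by field_simp; ring

lemma cConst_pos (ℓ : ℝ) (hl : -(1 / 2) ≤ ℓ) : 0 < cConst ℓ := by
  have hi := cConst_integrable ℓ hl
  unfold cConst
  refine mul_pos (by positivity) ?_
  rw [setIntegral_pos_iff_support_of_nonneg_ae _ hi]
  · have : Set.Ioo (0:ℝ) 1 ⊆ Function.support (fun s : ℝ => s ^ ℓ / Real.sqrt (1 - s)) ∩ Set.Ioc 0 1 := by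
      rintro s ⟨h0, h1⟩
      refine ⟨?_, h0, h1.le⟩
      have : 0 < √(1-s) := Real.sqrt_pos.2 (by linarith)
      exact (div_pos (Real.rpow_pos_of_pos h0 _) this).ne'
    refine lt_of_lt_of_le ?_ (measure_mono this)
    simp
  · refine (ae_restrict_iff' measurableSet_Ioc).2 (Eventually.of_forall ?_)
    rintro s ⟨hs0, hs1⟩
    simp only [Pi.zero_apply]
    positivity

lemma base_nonneg {Y ε : ℝ} (h : ε ≤ Real.exp Y) : 0 ≤ 1 - ε * Real.exp (-Y) := by
  have : ε * Real.exp (-Y) ≤ Real.exp Y * Real.exp (-Y) := by gcongr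
  rw [← Real.exp_add] at this
  simp at this
  linarith

lemma base2_nonneg {L0 r ε : ℝ} (hL : 0 < L0) (hr : 0 < r) (h : √L0 / r ≤ ε) :
    0 ≤ ε ^ 2 - L0 / r ^ 2 := by
  have : (√L0 / r)^2 ≤ ε^2 := by gcongr
  rw [div_pow, Real.sq_sqrt hL.le] at this
  linarith

lemma rho_nonneg (k ℓ L0 : ℝ) (hl : -(1 / 2) ≤ ℓ) (hL : 0 < L0) (y : ℝ → ℝ) (r : ℝ)
    (hr : 0 < r) : 0 ≤ rho k ℓ L0 y r := by
  unfold rho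
  have := cConst_pos ℓ hl
  refine mul_nonneg (by positivity) (setIntegral_nonneg measurableSet_Ioc ?_)
  rintro ε ⟨h1, h2⟩
  have := base_nonneg h2
  have := base2_nonneg hL hr h1.le
  positivity

lemma pres_nonneg (k ℓ L0 : ℝ) (hl : -(1 / 2) ≤ ℓ) (hL : 0 < L0) (y : ℝ → ℝ) (r : ℝ)
    (hr : 0 < r) : 0 ≤ pres k ℓ L0 y r := by
  unfold pres
  have := cConst_pos ℓ hl
  have : 0 < 2 * ℓ + 3 := by linarith
  refine mul_nonneg (by positivity) (setIntegral_nonneg measurableSet_Ioc ?_)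
  rintro ε ⟨h1, h2⟩
  have := base_nonneg h2
  have := base2_nonneg hL hr h1.le
  positivity

lemma mass_nonneg (k ℓ L0 : ℝ) (hl : -(1 / 2) ≤ ℓ) (hL : 0 < L0) (y : ℝ → ℝ) (r : ℝ) :
    0 ≤ hawkingMass k ℓ L0 y r := by
  unfold hawkingMass
  refine mul_nonneg (by positivity) (setIntegral_nonneg measurableSet_Ioc ?_)
  rintro s ⟨h1, h2⟩
  have := rho_nonneg k ℓ L0 hl hL y s h1
  positivity

lemma y_le (k ℓ L0 : ℝ) (hl : -(1 / 2) ≤ ℓ) (hL : 0 < L0) (y : ℝ → ℝ)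
    (hy : QuasiShell k ℓ L0 y) (r : ℝ) (hr : 0 ≤ r) : y r ≤ y 0 := by
  obtain ⟨hc, hd⟩ := hy
  have : AntitoneOn y (Set.Ici 0) := by
    refine antitoneOn_of_deriv_nonpos (convex_Ici 0) hc.continuousOn ?_ ?_
    · intro x hx
      rw [interior_Ici] at hx
      exact (hd x hx).2.differentiableAt.differentiableWithinAt
    · intro x hx
      rw [interior_Ici] at hx
      have hx : 0 < x := hx
      obtain ⟨h1, h2⟩ := hd x hx
      rw [h2.deriv]
      have := pres_nonneg k ℓ L0 hl hL y x hx
      have := mass_nonneg k ℓ L0 hl hL y x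
      have h3 : 0 < (1 - 2 * hawkingMass k ℓ L0 y x / x)⁻¹ := inv_pos.2 (by linarith)
      have h4 : 0 ≤ (4 * π * x * pres k ℓ L0 y x + hawkingMass k ℓ L0 y x / x ^ 2) := by
        positivity
      nlinarith [mul_nonneg h3.le h4]
  exact this (by simp) hr hr

/-- The integral bounds. -/
lemma int_bounds (k n a g E : ℝ) (hk : 0 ≤ k) (hn : 0 ≤ n) (ha : 0 < a) (hg : 0 ≤ g)
    (hE1 : a + a * g ≤ E) (hE2 : E ≤ a + 2 * (a * g)) (hE3 : E ≤ 2 * a) :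
    (1/6) ^ k * (1/3) ^ n * (1/3) * (a ^ (2 * n + 1) * g ^ (k + n + 1)) ≤
      ∫ ε in Set.Ioc a E, (1 - ε * E⁻¹) ^ k * (ε ^ 2 - a ^ 2) ^ n ∧
    ∫ ε in Set.Ioc a E, (1 - ε * E⁻¹) ^ k * (ε ^ 2 - a ^ 2) ^ n ≤
      2 ^ k * 6 ^ n * 2 * (a ^ (2 * n + 1) * g ^ (k + n + 1)) := by
  have hag : 0 ≤ a * g := by positivity
  have hE : 0 < E := by linarith
  have hcont : Continuous (fun ε : ℝ => (1 - ε * E⁻¹) ^ k * (ε ^ 2 - a ^ 2) ^ n) := by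
    refine Continuous.mul (Continuous.rpow_const (by fun_prop) fun _ => Or.inr hk)
      (Continuous.rpow_const (by fun_prop) fun _ => Or.inr hn)
  have hInteg : ∀ u v : ℝ, IntegrableOn
      (fun ε : ℝ => (1 - ε * E⁻¹) ^ k * (ε ^ 2 - a ^ 2) ^ n) (Set.Ioc u v) :=
    fun u v => hcont.integrableOn_Ioc
  have key : ∀ A B C : ℝ, 0 ≤ A → 0 ≤ B → (A * g) ^ k * (B * (a^2 * g)) ^ n * (C * (a * g)) =
      A ^ k * B ^ n * C * (a ^ (2 * n + 1) * g ^ (k + n + 1)) := by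
    intro A B C hA hB
    rw [Real.mul_rpow hA hg, Real.mul_rpow hB (by positivity), Real.mul_rpow (by positivity) hg,
      Real.rpow_add_of_nonneg hg (by positivity) zero_le_one, Real.rpow_add_of_nonneg hg hk hn,
      Real.rpow_add ha, Real.rpow_mul ha.le]
    simp only [Real.rpow_one, Real.rpow_two]
    ring
  have nn : ∀ ε ∈ Set.Ioc a E, 0 ≤ 1 - ε * E⁻¹ ∧ 0 ≤ ε ^ 2 - a ^ 2 := by
    rintro ε ⟨h1, h2⟩
    constructor
    · rw [← div_eq_mul_inv, sub_nonneg, div_le_one hE]; exact h2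
    · nlinarith
  constructor
  · have hsub : Set.Ioc (a + (E - a)/3) (a + 2 * (E - a)/3) ⊆ Set.Ioc a E := by
      rintro x ⟨h1, h2⟩
      constructor <;> linarith
    rw [← key _ _ _ (by norm_num) (by norm_num)]
    have hvol : volume.real (Set.Ioc (a + (E - a)/3) (a + 2 * (E - a)/3)) = (E - a)/3 := by
      rw [Real.volume_real_Ioc_of_le (by linarith)]; ring
    calc _ ≤ ((1/6) * g) ^ k * ((1/3) * (a^2 * g)) ^ n * ((E - a)/3) := by
            gcongr; linarith
      _ = ∫ ε in Set.Ioc (a + (E - a)/3) (a + 2 * (E - a)/3),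
            ((1/6) * g) ^ k * ((1/3) * (a^2 * g)) ^ n := by
            rw [setIntegral_const, hvol, smul_eq_mul]; ring
      _ ≤ ∫ ε in Set.Ioc (a + (E - a)/3) (a + 2 * (E - a)/3),
            (1 - ε * E⁻¹) ^ k * (ε ^ 2 - a ^ 2) ^ n := by
            refine setIntegral_mono_on continuous_const.integrableOn_Ioc (hInteg _ _) measurableSet_Ioc ?_
            intro ε hε
            obtain ⟨p1, p2⟩ := nn ε (hsub hε)
            obtain ⟨h1, h2⟩ := hε
            have q1 : 1/6 * g ≤ 1 - ε * E⁻¹ := by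
              have : 1 - ε * E⁻¹ = (E - ε) / E := by field_simp
              rw [this, le_div_iff₀ hE]
              nlinarith
            have q2 : 1/3 * (a^2 * g) ≤ ε^2 - a^2 := by nlinarith
            gcongr
      _ ≤ _ := by
            refine setIntegral_mono_set (hInteg _ _) ?_ hsub.eventuallyLE
            refine (ae_restrict_iff' measurableSet_Ioc).2 (Eventually.of_forall ?_)
            intro ε hε
            obtain ⟨p1, p2⟩ := nn ε hε
            simp only [Pi.zero_apply]
            positivity
  · rw [← key _ _ _ (by norm_num) (by norm_num)]
    have hvol : volume.real (Set.Ioc a E) = E - a := by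
      rw [Real.volume_real_Ioc_of_le (by linarith)]
    calc _ ≤ ∫ ε in Set.Ioc a E, (2 * g) ^ k * (6 * (a^2 * g)) ^ n := by
            refine setIntegral_mono_on (hInteg _ _) continuous_const.integrableOn_Ioc measurableSet_Ioc ?_
            intro ε hε
            obtain ⟨p1, p2⟩ := nn ε hε
            obtain ⟨h1, h2⟩ := hε
            have q1 : 1 - ε * E⁻¹ ≤ 2 * g := by
              have : 1 - ε * E⁻¹ = (E - ε) / E := by field_simp
              rw [this, div_le_iff₀ hE]
              nlinarith
            have q2 : ε^2 - a^2 ≤ 6 * (a^2 * g) := by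
              have : ε^2 - a^2 = (ε - a) * (ε + a) := by ring
              have : (ε - a) * (ε + a) ≤ (2 * (a*g)) * (3 * a) := by
                apply mul_le_mul <;> linarith
              nlinarith
            gcongr
      _ = (2 * g) ^ k * (6 * (a^2 * g)) ^ n * (E - a) := by
            rw [setIntegral_const, hvol, smul_eq_mul]; ring
      _ ≤ _ := by gcongr; linarith

/-- Two-sided bounds `C_l γ^{k+ℓ+5/2}/r⁴ ≤ p ≤ C_u γ^{k+ℓ+5/2}/r⁴`
on `[R₀, 2R₀]` where `γ ≥ 0`, with constants depending only on `k, ℓ, L₀`. -/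
theorem pres_bounds (k ℓ L0 : ℝ) (hk : 0 ≤ k) (hl : -(1 / 2) ≤ ℓ) (hL : 0 < L0) :
    ∃ Cl Cu : ℝ, 0 < Cl ∧ 0 < Cu ∧
      ∀ y : ℝ → ℝ, QuasiShell k ℓ L0 y →
        ∀ r, innerRadius L0 y ≤ r → r ≤ 2 * innerRadius L0 y →
          0 ≤ charFn L0 y r →
          Cl * charFn L0 y r ^ (k + ℓ + 5 / 2) / r ^ 4 ≤ pres k ℓ L0 y r ∧
          pres k ℓ L0 y r ≤ Cu * charFn L0 y r ^ (k + ℓ + 5 / 2) / r ^ 4 := by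
  have hc := cConst_pos ℓ hl
  have h23 : 0 < 2 * ℓ + 3 := by linarith
  refine ⟨cConst ℓ / (2 * ℓ + 3) * ((1/6) ^ k * (1/3) ^ (ℓ + 3/2) * (1/3)) * L0 ^ (ℓ + 2),
    cConst ℓ / (2 * ℓ + 3) * (2 ^ k * 6 ^ (ℓ + 3/2) * 2) * L0 ^ (ℓ + 2),
    by positivity, by positivity, ?_⟩
  intro y hy r hr1 hr2 hg
  have hR : 0 < innerRadius L0 y := by unfold innerRadius; positivity
  have hr : 0 < r := by linarith
  have hyr := y_le k ℓ L0 hl hL y hy r hr.le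
  obtain ⟨a, ha⟩ : ∃ a, a = √L0 / r := ⟨_, rfl⟩
  have ha0 : 0 < a := by rw [ha]; positivity
  have ha2 : L0 / r ^ 2 = a ^ 2 := by rw [ha, div_pow, Real.sq_sqrt hL.le]
  obtain ⟨g, hgd⟩ : ∃ g, g = charFn L0 y r := ⟨_, rfl⟩
  rw [← hgd] at hg ⊢
  have hEg : Real.exp (y r) = a * Real.exp g := by
    have : g = y r - Real.log a := by
      rw [hgd, charFn, ha2, Real.log_pow]; push_cast; ring
    rw [this, Real.exp_sub, Real.exp_log ha0]; field_simp
  have hE3 : Real.exp (y r) ≤ 2 * a := by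
    have h1 : Real.exp (y r) ≤ Real.exp (y 0) := Real.exp_le_exp.2 hyr
    refine h1.trans ?_
    rw [ha, ← mul_div_assoc, le_div_iff₀ hr]
    calc _ ≤ Real.exp (y 0) * (2 * innerRadius L0 y) := by gcongr
      _ = 2 * √L0 * (Real.exp (y 0) * Real.exp (-(y 0))) := by unfold innerRadius; ring
      _ = _ := by rw [← Real.exp_add]; simp
  have hE1 : a + a * g ≤ Real.exp (y r) := by
    rw [hEg]; nlinarith [Real.add_one_le_exp g]
  have hE2 : Real.exp (y r) ≤ a + 2 * (a * g) := by
    have h2 : Real.exp g ≤ 2 := by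
      rw [hEg] at hE3; nlinarith
    have h3 : Real.exp g * (1 - g) ≤ 1 := by
      have := mul_le_mul_of_nonneg_left (Real.add_one_le_exp (-g)) (Real.exp_pos g).le
      rw [← Real.exp_add] at this
      simp at this
      linarith
    have h4 : Real.exp g ≤ 1 + 2 * g := by nlinarith
    rw [hEg]; nlinarith
  obtain ⟨b1, b2⟩ := int_bounds k (ℓ + 3/2) a g _ hk (by linarith) ha0 hg hE1 hE2 hE3
  have hp : pres k ℓ L0 y r = (cConst ℓ / (2 * ℓ + 3)) * r ^ (2 * ℓ) *
      ∫ ε in Set.Ioc a (Real.exp (y r)),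
        (1 - ε * (Real.exp (y r))⁻¹) ^ k * (ε ^ 2 - a ^ 2) ^ (ℓ + 3 / 2) := by
    rw [pres, ha2, ha, Real.exp_neg]
  have hscale : r ^ (2 * ℓ) * a ^ (2 * (ℓ + 3/2) + 1) = L0 ^ (ℓ + 2) / r ^ 4 := by
    have e : 2 * (ℓ + 3/2) + 1 = 2 * (ℓ + 2) := by ring
    rw [e, ha, Real.div_rpow (by positivity) hr.le, Real.rpow_mul (Real.sqrt_nonneg _),
      Real.rpow_two, Real.sq_sqrt hL.le]
    have : r ^ (2 * (ℓ + 2)) = r ^ (2 * ℓ) * r ^ 4 := by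
      rw [← Real.rpow_natCast, ← Real.rpow_add hr]; congr 1; push_cast; ring
    rw [this]
    have := Real.rpow_pos_of_pos hr (2 * ℓ)
    field_simp
  have hexp : k + ℓ + 5/2 = k + (ℓ + 3/2) + 1 := by ring
  have hK : ∀ K : ℝ, cConst ℓ / (2 * ℓ + 3) * K * L0 ^ (ℓ + 2) * g ^ (k + ℓ + 5/2) / r ^ 4 =
      (cConst ℓ / (2 * ℓ + 3)) * r ^ (2 * ℓ) *
        (K * (a ^ (2 * (ℓ + 3/2) + 1) * g ^ (k + (ℓ + 3/2) + 1))) := by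
    intro K
    rw [← hexp]
    calc _ = cConst ℓ / (2 * ℓ + 3) * K * g ^ (k + ℓ + 5/2) * (L0 ^ (ℓ + 2) / r ^ 4) := by ring
      _ = _ := by rw [← hscale]; ring
  have hpre : 0 ≤ (cConst ℓ / (2 * ℓ + 3)) * r ^ (2 * ℓ) := by positivity
  rw [hp, hK, hK]
  exact ⟨mul_le_mul_of_nonneg_left b1 hpre, mul_le_mul_of_nonneg_left b2 hpre⟩
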